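/- Existence, uniqueness, and characterization of ρ**_Λ: For every real number Λ > 2 there exists a unique ρ**_Λ ∈ (0,1) satisfying (1 + ρ**_Λ)^{Λ+1} = 4·(1 − ρ**_Λ + 2·(ρ**_Λ)²)^{Λ−1}. Moreover, for every ρ ∈ (0,1), the inequality (1 + ρ)^{Λ+1} ≤ 4·(1 − ρ + 2ρ²)^{Λ−1} holds if and only if ρ ≤ ρ**_Λ. -/

import Mathlib

/-!
Taking logarithms turns the inequality into `f ρ ≤ log 4`, where
`f ρ = (Λ+1) log (1+ρ) - (Λ-1) log (1-ρ+2ρ²)`. The function `f` is strictly concave on `[0,1]`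
(`strictConcaveOn_logRatio`), with `f 0 = 0`, `f 1 = log 4` and `f' 1 = 2 - Λ < 0`. The last fact
makes `f` exceed `log 4` just to the left of `1` (`exists_log_four_lt`), so `f` takes the value
`log 4` at some `r ∈ (0,1)`. Since `f r = f 1 = log 4`, strict concavity forces `f < log 4` on
`(0,r)` and `f > log 4` on `(r,1)`, which gives both uniqueness and the characterization.
-/

/-- The logarithm of `(1+ρ)^(Λ+1) / (1-ρ+2ρ²)^(Λ-1)`, for `ρ > -1`. -/
noncomputable def logRatio (Λ ρ : ℝ) : ℝ :=
  (Λ + 1) * Real.log (1 + ρ) - (Λ - 1) * Real.log (1 - ρ + 2 * ρ ^ 2)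

/-- The derivative of `logRatio Λ` on `(-1, ∞)`. -/
noncomputable def logRatioDeriv (Λ ρ : ℝ) : ℝ :=
  (Λ + 1) / (1 + ρ) - (Λ - 1) * ((4 * ρ - 1) / (1 - ρ + 2 * ρ ^ 2))

lemma quad_pos (ρ : ℝ) : 0 < 1 - ρ + 2 * ρ ^ 2 := by nlinarith [sq_nonneg (4 * ρ - 1)]

lemma hasDerivAt_quad (ρ : ℝ) :
    HasDerivAt (fun x : ℝ => 1 - x + 2 * x ^ 2) (4 * ρ - 1) ρ := by
  have h := (((hasDerivAt_id ρ).const_sub 1).add (((hasDerivAt_id ρ).pow 2).const_mul 2))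
  refine HasDerivAt.congr_deriv (f := fun x : ℝ => 1 - x + 2 * x ^ 2) h ?_
  simp
  ring

lemma hasDerivAt_logRatio (Λ : ℝ) {ρ : ℝ} (h : -1 < ρ) :
    HasDerivAt (logRatio Λ) (logRatioDeriv Λ ρ) ρ := by
  have h1 := (((hasDerivAt_id ρ).const_add 1).log (by simp; linarith)).const_mul (Λ + 1)
  have h2 := ((hasDerivAt_quad ρ).log (quad_pos ρ).ne').const_mul (Λ - 1)
  refine HasDerivAt.congr_deriv (f := logRatio Λ) (h1.sub h2) ?_
  simp [logRatioDeriv, div_eq_mul_inv]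

lemma hasDerivAt_logRatioDeriv (Λ : ℝ) {ρ : ℝ} (h : -1 < ρ) :
    HasDerivAt (logRatioDeriv Λ)
      (-(Λ + 1) / (1 + ρ) ^ 2
        - (Λ - 1) * ((3 + 4 * ρ - 8 * ρ ^ 2) / (1 - ρ + 2 * ρ ^ 2) ^ 2)) ρ := by
  have h1 := (hasDerivAt_const ρ (Λ + 1)).div ((hasDerivAt_id ρ).const_add 1)
    (by simp; linarith)
  have h2 := (((((hasDerivAt_id ρ).const_mul 4).sub_const 1)).div (hasDerivAt_quad ρ)
    (quad_pos ρ).ne').const_mul (Λ - 1)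
  refine HasDerivAt.congr_deriv (f := logRatioDeriv Λ) (h1.sub h2) ?_
  simp only [id]
  ring

lemma continuousOn_logRatio (Λ : ℝ) : ContinuousOn (logRatio Λ) (Set.Icc 0 1) := fun x hx =>
  (hasDerivAt_logRatio Λ (by linarith [hx.1])).continuousAt.continuousWithinAt

lemma strictAntiOn_logRatioDeriv {Λ : ℝ} (hΛ : 1 ≤ Λ) :
    StrictAntiOn (logRatioDeriv Λ) (Set.Icc 0 1) := by
  apply strictAntiOn_of_deriv_neg (convex_Icc 0 1)
  · exact fun x hx =>
      (hasDerivAt_logRatioDeriv Λ (by linarith [hx.1])).continuousAt.continuousWithinAt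
  · intro x hx
    rw [interior_Icc] at hx
    obtain ⟨h0, h1⟩ := hx
    rw [(hasDerivAt_logRatioDeriv Λ (by linarith)).deriv]
    have hq := quad_pos x
    have hp : 0 < 1 + x := by linarith
    -- Splitting `Λ + 1 = (Λ - 1) + 2`, the `Λ - 1` part of the numerator factors through `1 - x`.
    have key : 0 ≤ 4 + 8 * x + 8 * x ^ 2 - 16 * x ^ 3 - 4 * x ^ 4 := by
      have e : 4 + 8 * x + 8 * x ^ 2 - 16 * x ^ 3 - 4 * x ^ 4
          = 4 * ((1 - x) * (1 + 3 * x + 5 * x ^ 2 + x ^ 3)) := by ring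
      have : 0 ≤ 1 - x := by linarith
      rw [e]
      positivity
    have e : -(Λ + 1) / (1 + x) ^ 2
        - (Λ - 1) * ((3 + 4 * x - 8 * x ^ 2) / (1 - x + 2 * x ^ 2) ^ 2)
        = -((Λ - 1) * (4 + 8 * x + 8 * x ^ 2 - 16 * x ^ 3 - 4 * x ^ 4)
            + 2 * (1 - x + 2 * x ^ 2) ^ 2) / ((1 + x) ^ 2 * (1 - x + 2 * x ^ 2) ^ 2) := by
      field_simp
      ring
    rw [e]
    apply div_neg_of_neg_of_pos _ (by positivity)
    have := mul_nonneg (sub_nonneg.2 hΛ) key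
    have : 0 < (1 - x + 2 * x ^ 2) ^ 2 := by positivity
    linarith

lemma strictConcaveOn_logRatio {Λ : ℝ} (hΛ : 1 ≤ Λ) :
    StrictConcaveOn ℝ (Set.Icc 0 1) (logRatio Λ) := by
  apply StrictAntiOn.strictConcaveOn_of_deriv (convex_Icc 0 1) (continuousOn_logRatio Λ)
  rw [interior_Icc]
  refine ((strictAntiOn_logRatioDeriv hΛ).mono Set.Ioo_subset_Icc_self).congr fun x hx => ?_
  exact (hasDerivAt_logRatio Λ (by linarith [hx.1])).deriv.symm

lemma logRatio_zero (Λ : ℝ) : logRatio Λ 0 = 0 := by simp [logRatio]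

lemma logRatio_one (Λ : ℝ) : logRatio Λ 1 = Real.log 4 := by
  rw [show (4 : ℝ) = 2 ^ 2 by norm_num, Real.log_pow, logRatio]
  norm_num
  ring

lemma exists_log_four_lt {Λ : ℝ} (hΛ : 2 < Λ) :
    ∃ c ∈ Set.Ioo (0 : ℝ) 1, Real.log 4 < logRatio Λ c := by
  have hd : HasDerivAt (logRatio Λ) (2 - Λ) 1 := by
    convert hasDerivAt_logRatio Λ (ρ := 1) (by norm_num) using 1
    norm_num [logRatioDeriv]
    ring
  have ht := (hasDerivAt_iff_tendsto_slope.1 hd).mono_left (show nhdsWithin 1 (Set.Iio 1) ≤ _ from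
    nhdsWithin_mono _ fun x (hx : x < 1) => hx.ne)
  have hs := ht.eventually_lt_const (show 2 - Λ < 0 by linarith)
  obtain ⟨c, hc, hc'⟩ := (hs.and (Ioo_mem_nhdsLT one_pos)).exists
  refine ⟨c, hc', ?_⟩
  rw [slope_def_field, logRatio_one] at hc
  by_contra! hle
  exact absurd hc (not_lt.2 (div_nonneg_of_nonpos (by linarith) (by linarith [hc'.2])))

lemma log_lhs (Λ : ℝ) {ρ : ℝ} (h : -1 < ρ) :
    Real.log ((1 + ρ) ^ (Λ + 1)) = (Λ + 1) * Real.log (1 + ρ) :=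
  Real.log_rpow (by linarith) _

lemma log_rhs (Λ ρ : ℝ) : Real.log (4 * (1 - ρ + 2 * ρ ^ 2) ^ (Λ - 1))
    = Real.log 4 + (Λ - 1) * Real.log (1 - ρ + 2 * ρ ^ 2) := by
  have := quad_pos ρ
  rw [Real.log_mul (by norm_num) (by positivity), Real.log_rpow this]

lemma rpow_le_iff (Λ : ℝ) {ρ : ℝ} (h : -1 < ρ) :
    (1 + ρ) ^ (Λ + 1) ≤ 4 * (1 - ρ + 2 * ρ ^ 2) ^ (Λ - 1) ↔ logRatio Λ ρ ≤ Real.log 4 := by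
  have hq := quad_pos ρ
  have hp : 0 < 1 + ρ := by linarith
  rw [← Real.log_le_log_iff (by positivity) (by positivity), log_lhs Λ h, log_rhs, logRatio,
    sub_le_iff_le_add]

lemma rpow_eq_iff (Λ : ℝ) {ρ : ℝ} (h : -1 < ρ) :
    (1 + ρ) ^ (Λ + 1) = 4 * (1 - ρ + 2 * ρ ^ 2) ^ (Λ - 1) ↔ logRatio Λ ρ = Real.log 4 := by
  have hq := quad_pos ρ
  have hp : 0 < 1 + ρ := by linarith
  rw [← Real.log_injOn_pos.eq_iff (Set.mem_Ioi.2 (by positivity)) (Set.mem_Ioi.2 (by positivity)),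
    log_lhs Λ h, log_rhs, logRatio, sub_eq_iff_eq_add]

/-- For a strictly concave function the middle of three points beats the minimum of the
two outer values. -/
lemma min_lt_of_lt_of_lt {Λ : ℝ} (hΛ : 1 ≤ Λ) {x y z : ℝ} (hx : 0 ≤ x) (hxy : x < y)
    (hyz : y < z) (hz : z ≤ 1) : min (logRatio Λ x) (logRatio Λ z) < logRatio Λ y :=
  (strictConcaveOn_logRatio hΛ).lt_on_openSegment ⟨hx, by linarith⟩ ⟨by linarith, hz⟩
    (hxy.trans hyz).ne (by rw [openSegment_eq_Ioo (hxy.trans hyz)]; exact ⟨hxy, hyz⟩)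

/-- **Existence, uniqueness, and characterization of `ρ**_Λ`.**
For every real `Λ > 2` there is a unique `ρ**_Λ ∈ (0,1)` with
`(1+ρ**_Λ)^{Λ+1} = 4(1−ρ**_Λ+2(ρ**_Λ)²)^{Λ−1}`, and for every `ρ ∈ (0,1)`
one has `(1+ρ)^{Λ+1} ≤ 4(1−ρ+2ρ²)^{Λ−1}` if and only if `ρ ≤ ρ**_Λ`. -/
theorem rhoDoubleStar_exists_unique (Λ : ℝ) (hΛ : 2 < Λ) :
    ∃ ρss : ℝ, ρss ∈ Set.Ioo (0 : ℝ) 1 ∧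
      (1 + ρss) ^ (Λ + 1) = 4 * (1 - ρss + 2 * ρss ^ 2) ^ (Λ - 1) ∧
      (∀ ρ ∈ Set.Ioo (0 : ℝ) 1,
        (1 + ρ) ^ (Λ + 1) = 4 * (1 - ρ + 2 * ρ ^ 2) ^ (Λ - 1) → ρ = ρss) ∧
      (∀ ρ ∈ Set.Ioo (0 : ℝ) 1,
        ((1 + ρ) ^ (Λ + 1) ≤ 4 * (1 - ρ + 2 * ρ ^ 2) ^ (Λ - 1) ↔ ρ ≤ ρss)) := by
  have hΛ1 : 1 ≤ Λ := by linarith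
  obtain ⟨c, hc, hcL⟩ := exists_log_four_lt hΛ
  have hL : 0 < Real.log 4 := Real.log_pos (by norm_num)
  obtain ⟨r, hr, hrL⟩ := intermediate_value_Ioo hc.1.le
    ((continuousOn_logRatio Λ).mono (Set.Icc_subset_Icc_right hc.2.le))
    (show Real.log 4 ∈ Set.Ioo _ _ from ⟨by rwa [logRatio_zero], hcL⟩)
  have hr1 : r < 1 := hr.2.trans hc.2
  have hlt : ∀ ρ ∈ Set.Ioo (0 : ℝ) 1, ρ < r → logRatio Λ ρ < Real.log 4 := by
    intro ρ hρ h
    have := min_lt_of_lt_of_lt hΛ1 hρ.1.le h hr1 le_rfl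
    rw [logRatio_one, hrL, min_lt_iff] at this
    simpa using this
  have hgt : ∀ ρ ∈ Set.Ioo (0 : ℝ) 1, r < ρ → Real.log 4 < logRatio Λ ρ := by
    intro ρ hρ h
    have := min_lt_of_lt_of_lt hΛ1 hr.1.le h hρ.2 le_rfl
    rwa [logRatio_one, hrL, min_self] at this
  refine ⟨r, ⟨hr.1, hr1⟩, (rpow_eq_iff Λ (by linarith [hr.1])).2 hrL, ?_, ?_⟩
  · intro ρ hρ h
    rw [rpow_eq_iff Λ (by linarith [hρ.1])] at h
    rcases lt_trichotomy ρ r with h' | h' | h'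
    · exact absurd h (hlt ρ hρ h').ne
    · exact h'
    · exact absurd h (hgt ρ hρ h').ne'
  · intro ρ hρ
    rw [rpow_le_iff Λ (by linarith [hρ.1])]
    refine ⟨fun h => not_lt.1 fun h' => absurd h (not_le.2 (hgt ρ hρ h')), fun h => ?_⟩
    rcases h.lt_or_eq with h' | rfl
    · exact (hlt ρ hρ h').le
    · exact hrL.le
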